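/- Let Q and D be computable real numbers with Q > 0 and 0 < D < 1. Then the series W(Q,D) = ∑_{p ∈ dom U} |p|^Q · 2^{−|p|/D} converges, and its sum is a left-computable real number which is Chaitin D-random and D-compressible. -/

import Mathlib

open Filter

/-- A set of finite binary strings is prefix-free if no element of it is a
prefix of another (distinct) element of it. -/
def PrefixFree (S : Set (List Bool)) : Prop :=
  ∀ p ∈ S, ∀ q ∈ S, p <+: q → p = q

/-- A computer: a partial recursive function from finite binary strings to
finite binary strings whose domain is a prefix-free set. -/
structure Computer where
  f : List Bool →. List Bool
  partrec : Partrec f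
  prefixFree : PrefixFree {p | (f p).Dom}

/-- The domain of a computer. -/
def Computer.domain (C : Computer) : Set (List Bool) := {p | (C.f p).Dom}

/-- A computer `U` is optimal if every computer can be simulated on `U` with
only a constant increase in program length. -/
def IsOptimal (U : Computer) : Prop :=
  ∀ C : Computer, ∃ d : ℕ, ∀ p : List Bool, (C.f p).Dom →
    ∃ p' : List Bool, p'.length ≤ p.length + d ∧ ∀ s, s ∈ C.f p → s ∈ U.f p'

/-- Program-size complexity `H(s)`: the minimal length of a program `p`
with `U(p) = s`. -/
noncomputable def H (U : Computer) (s : List Bool) : ℕ :=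
  sInf {n | ∃ p : List Bool, p.length = n ∧ s ∈ U.f p}

/-- The `n`-th bit (`n ≥ 1`) of the base-two expansion of `x mod 1`
(the expansion chosen with infinitely many zeros). -/
noncomputable def binDigit (x : ℝ) (n : ℕ) : Bool :=
  decide (⌊Int.fract x * 2 ^ n⌋ % 2 = 1)

/-- The first `n` bits of the base-two expansion of `x mod 1` (with
infinitely many zeros). -/
noncomputable def bits (x : ℝ) (n : ℕ) : List Bool :=
  (List.range n).map fun i => binDigit x (i + 1)

/-- A real `x` is weakly Chaitin `D`-random (w.r.t. the computer `U`). -/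
def WeaklyChaitinRandom (U : Computer) (D x : ℝ) : Prop :=
  ∃ c : ℝ, ∀ n : ℕ, 1 ≤ n → D * n - c ≤ (H U (bits x n) : ℝ)

/-- A real `x` is Chaitin `D`-random (w.r.t. the computer `U`). -/
def ChaitinRandom (U : Computer) (D x : ℝ) : Prop :=
  Tendsto (fun n : ℕ => (H U (bits x n) : ℝ) - D * n) atTop atTop

/-- A real `x` is `D`-compressible (w.r.t. the computer `U`). -/
def DCompressible (U : Computer) (D x : ℝ) : Prop :=
  Filter.limsup (fun n : ℕ => (H U (bits x n) : ℝ) / n) atTop ≤ D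

/-- A computable real number. -/
def ComputableReal (T : ℝ) : Prop :=
  ∃ f : ℕ → ℚ, Computable f ∧ ∀ n : ℕ, 1 ≤ n → |T - (f n : ℝ)| < 1 / n

/-- A right-computable real number. -/
def RightComputable (T : ℝ) : Prop :=
  ∃ g : ℕ → ℚ, Computable g ∧ (∀ n, T ≤ (g n : ℝ)) ∧
    Tendsto (fun n => ((g n : ℚ) : ℝ)) atTop (nhds T)

/-- A left-computable real number. -/
def LeftComputable (T : ℝ) : Prop := RightComputable (-T)

/-- The term `2 ^ (-|p| / T)` of the partition function `Z(T)`. -/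
noncomputable def zterm (U : Computer) (T : ℝ) (p : U.domain) : ℝ :=
  (2 : ℝ) ^ (-((p : List Bool).length : ℝ) / T)

/-- The term `|p| ^ Q * 2 ^ (-|p| / T)` of `W(Q,T)`. -/
noncomputable def wterm (U : Computer) (Q T : ℝ) (p : U.domain) : ℝ :=
  ((p : List Bool).length : ℝ) ^ Q * (2 : ℝ) ^ (-((p : List Bool).length : ℝ) / T)

/-- The term `|p| * 2 ^ (-|p| / T)` of `W(1,T)`. -/
noncomputable def wlterm (U : Computer) (T : ℝ) (p : U.domain) : ℝ :=
  ((p : List Bool).length : ℝ) * (2 : ℝ) ^ (-((p : List Bool).length : ℝ) / T)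

/-- The term `|p| ^ 2 * 2 ^ (-|p| / T)` of `W(2,T)`. -/
noncomputable def wsqterm (U : Computer) (T : ℝ) (p : U.domain) : ℝ :=
  ((p : List Bool).length : ℝ) ^ 2 * (2 : ℝ) ^ (-((p : List Bool).length : ℝ) / T)

/-- A lower-computable function `f : ℕ⁺ → [0,∞)` (represented on `ℕ`,
with all conditions imposed on positive arguments). -/
def LowerComputableFun (f : ℕ → ℝ) : Prop :=
  ∃ a : ℕ → ℕ → ℚ, Computable₂ a ∧
    (∀ k n : ℕ, 1 ≤ k → 1 ≤ n → (a k n : ℝ) ≤ f n) ∧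
    (∀ n : ℕ, 1 ≤ n → Tendsto (fun k => ((a k n : ℚ) : ℝ)) atTop (nhds (f n)))

/-- A lower-computable semi-measure on finite binary strings. -/
def LowerComputableSemiMeasure (r : List Bool → ℝ) : Prop :=
  (∀ s, 0 ≤ r s) ∧ (∀ s, r s ≤ 1) ∧ Summable r ∧ (∑' s, r s) ≤ 1 ∧
    ∃ f : ℕ → List Bool → ℚ, Computable₂ f ∧
      (∀ n s, ((f n s : ℚ) : ℝ) ≤ r s) ∧
      (∀ s, Tendsto (fun n => ((f n s : ℚ) : ℝ)) atTop (nhds (r s)))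

/-- A universal probability. -/
def UniversalProbability (m : List Bool → ℝ) : Prop :=
  LowerComputableSemiMeasure m ∧
    ∀ r : List Bool → ℝ, LowerComputableSemiMeasure r →
      ∃ c : ℝ, 0 < c ∧ ∀ s, c * r s ≤ m s

/-!
Enumerate `dom U` computably. The partial sums `W k` of `W = W(Q,D)` and `Ω k` of
`Ω = ∑ p, 2 ^ (-|p|)` along the enumeration can be computed to any precision, and from the first
`n` bits of such a sum one can compute a stage at which the tail is `O(2 ^ (-n))`.

Randomness: at the stage obtained from the first `n` bits of `W`, choose a string `t` not produced
so far. All its programs come later, so a shortest one, of length `l`, satisfies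
`l ^ Q * 2 ^ (-l / D) = O(2 ^ (-n))`, i.e. `l ≥ D * n + D * Q * log₂ l - O(1)`. As
`l = H t ≤ H (bits W n) + O(1)`, the logarithm makes `H (bits W n) - D * n` tend to infinity.

Compressibility: if `D < K / M ≤ 1`, then `|p| ^ Q * 2 ^ (-|p| / D) ≤ C * (2 ^ (-|p|)) ^ (M / K)`,
and the superadditivity of `x ↦ x ^ (M / K)` turns this into
`W - W k ≤ C * (Ω - Ω k) ^ (M / K)`. Hence the first `K * n / M` bits of `Ω`, whose complexity is
at most `(K + 1) * n / M + O(1)`, determine the first `n` bits of `W` up to boundedly many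
possibilities.
-/

section ComputableFunctions

variable {α β γ : Type*} [Primcodable α] [Primcodable β] [Primcodable γ]

attribute [fun_prop] Computable Computable.id Computable.const

@[fun_prop]
theorem computable_comp {f : β → γ} {g : α → β} (hf : Computable f) (hg : Computable g) :
    Computable fun a => f (g a) :=
  hf.comp hg

@[fun_prop]
theorem computable_prodMk {f : α → β} {g : α → γ} (hf : Computable f) (hg : Computable g) :
    Computable fun a => (f a, g a) :=
  hf.pair hg

@[fun_prop]
theorem computable_fst {f : α → β × γ} (hf : Computable f) : Computable fun a => (f a).1 :=
  Computable.fst.comp hf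

@[fun_prop]
theorem computable_snd {f : α → β × γ} (hf : Computable f) : Computable fun a => (f a).2 :=
  Computable.snd.comp hf

@[fun_prop]
theorem computable_unpair {f : α → ℕ} (hf : Computable f) : Computable fun a => (f a).unpair :=
  Computable.unpair.comp hf

section Arithmetic

variable {f g : α → ℕ}

@[fun_prop]
theorem computable_add (hf : Computable f) (hg : Computable g) : Computable fun a => f a + g a :=
  Primrec.nat_add.to_comp.comp hf hg

@[fun_prop]
theorem computable_sub (hf : Computable f) (hg : Computable g) : Computable fun a => f a - g a :=
  Primrec.nat_sub.to_comp.comp hf hg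

@[fun_prop]
theorem computable_mul (hf : Computable f) (hg : Computable g) : Computable fun a => f a * g a :=
  Primrec.nat_mul.to_comp.comp hf hg

@[fun_prop]
theorem computable_div (hf : Computable f) (hg : Computable g) : Computable fun a => f a / g a :=
  Primrec.nat_div.to_comp.comp hf hg

@[fun_prop]
theorem computable_mod (hf : Computable f) (hg : Computable g) : Computable fun a => f a % g a :=
  Primrec.nat_mod.to_comp.comp hf hg

@[fun_prop]
theorem computable_pow (hf : Computable f) (hg : Computable g) : Computable fun a => f a ^ g a :=
  (Primrec₂.unpaired'.1 Nat.Primrec.pow).to_comp.comp hf hg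

theorem computablePred_eq (hf : Computable f) (hg : Computable g) :
    ComputablePred fun a => f a = g a :=
  ⟨_, Primrec.eq.decide.to_comp.comp hf hg⟩

theorem computablePred_le (hf : Computable f) (hg : Computable g) :
    ComputablePred fun a => f a ≤ g a :=
  ⟨_, Primrec.nat_le.decide.to_comp.comp hf hg⟩

theorem computablePred_lt (hf : Computable f) (hg : Computable g) :
    ComputablePred fun a => f a < g a :=
  ⟨_, Primrec.nat_lt.decide.to_comp.comp hf hg⟩

@[fun_prop]
theorem computable_length {f : α → List β} (hf : Computable f) :
    Computable fun a => (f a).length :=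
  Computable.list_length.comp hf

end Arithmetic

theorem computablePred_comp {p : β → Prop} {f : α → β} (hp : ComputablePred p)
    (hf : Computable f) : ComputablePred fun a => p (f a) :=
  let ⟨_, hp⟩ := hp
  ⟨fun _ => inferInstance, hp.comp hf⟩

theorem computablePred_and {p q : α → Prop} (hp : ComputablePred p) (hq : ComputablePred q) :
    ComputablePred fun a => p a ∧ q a := by
  classical
  exact ((Primrec.and.to_comp.comp hp.decide hq.decide).of_eq fun a => by simp).computablePred

theorem computable_ite {p : α → Prop} [DecidablePred p] {f g : α → β} (hp : ComputablePred p)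
    (hf : Computable f) (hg : Computable g) : Computable fun a => if p a then f a else g a := by
  refine (hp.decide.cond hf hg).of_eq fun a => ?_
  by_cases h : p a <;> simp [h]

theorem primrecRel_coprime : PrimrecRel Nat.Coprime := by
  have common_dvd_eq_one : PrimrecRel fun (d : ℕ) (p : ℕ × ℕ) =>
      ¬(p.1 % d = 0 ∧ p.2 % d = 0) ∨ d = 1 :=
    .or (.not (.and (Primrec.eq.comp (Primrec.nat_mod.comp (.comp .fst .snd) .fst) (.const 0))
        (Primrec.eq.comp (Primrec.nat_mod.comp (.comp .snd .snd) .fst) (.const 0))))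
      (Primrec.eq.comp .fst (.const 1))
  refine (common_dvd_eq_one.forall_mem_list.comp
    (Primrec.list_range.comp (Primrec.succ.comp (Primrec.nat_add.comp .fst .snd)))
    (Primrec.pair .fst .snd)).of_eq fun ⟨a, b⟩ => ?_
  simp only [List.mem_range, ← Nat.dvd_iff_mod_eq_zero, Nat.Coprime]
  refine ⟨fun h => ?_, fun h d _ => ?_⟩
  · have gcd_lt : a.gcd b < a + b + 1 := by
      rcases a.eq_zero_or_pos with rfl | ha
      · simp
      · have := Nat.gcd_le_left b ha
        omega
    exact (h _ gcd_lt).resolve_left (not_not.2 ⟨Nat.gcd_dvd_left a b, Nat.gcd_dvd_right a b⟩)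
  · exact or_iff_not_imp_left.2 fun hd =>
      Nat.dvd_one.1 (h ▸ Nat.dvd_gcd (not_not.1 hd).1 (not_not.1 hd).2)

theorem computable_subtype_ofNat {s : Set ℕ} [Infinite s] [DecidablePred (· ∈ s)]
    (hs : ComputablePred (· ∈ s)) : Computable fun n => (Nat.Subtype.ofNat s n : ℕ) := by
  have exists_add_mem (y : ℕ) : ∃ m, y + m + 1 ∈ s := by
    obtain ⟨x, hx, hyx⟩ := (Set.infinite_coe_iff.1 ‹Infinite s›).exists_gt y
    exact ⟨x - y - 1, by rwa [show y + (x - y - 1) + 1 = x by omega]⟩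
  have gap : Computable fun y => Nat.find (exists_add_mem y) :=
    Computable.find (P := fun y m => y + m + 1 ∈ s)
      (computablePred_comp hs (f := fun p : ℕ × ℕ => p.1 + p.2 + 1) (by fun_prop)) exists_add_mem
  have step : Computable fun y => y + Nat.find (exists_add_mem y) + 1 :=
    computable_add (computable_add .id gap) (.const 1)
  refine (Computable.nat_rec .id (.const ((⊥ : s) : ℕ))
    (step.comp (.comp .snd .snd)).to₂).of_eq fun n => ?_
  induction n with
  | zero => rfl
  | succ n ih => exact congrArg (fun y => y + Nat.find (exists_add_mem y) + 1) ih

end ComputableFunctions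

section RationalComputability

theorem encode_int (z : ℤ) :
    Encodable.encode z = if 0 ≤ z then 2 * z.natAbs else 2 * z.natAbs - 1 := by
  cases z <;> simp [Encodable.encode, Equiv.intEquivNat, Equiv.intEquivNatSumNat] <;> rfl

@[fun_prop]
theorem computable_natAbs : Computable Int.natAbs := by
  have h : Computable fun e : ℕ => (e + 1) / 2 := by fun_prop
  refine (h.comp Computable.encode).of_eq fun z => ?_
  simp only [encode_int]
  split_ifs <;> omega

@[fun_prop]
theorem computable_toNat : Computable Int.toNat := by
  have h : Computable fun e : ℕ => if e % 2 = 0 then e / 2 else 0 :=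
    computable_ite (computablePred_eq (by fun_prop) (by fun_prop)) (by fun_prop) (by fun_prop)
  refine (h.comp Computable.encode).of_eq fun z => ?_
  simp only [encode_int]
  split_ifs <;> omega

/-- The code of a rational number underlying the enumeration `Denumerable ℚ`, which lists the
rationals by increasing code. -/
def ratCode (q : ℚ) : ℕ := Nat.pair (Encodable.encode q.num) q.den

theorem ratCode_injective : Function.Injective ratCode :=
  (Rat.instEncodable : Encodable ℚ).encode_injective

instance : Infinite (Set.range ratCode) :=
  (Set.infinite_range_of_injective ratCode_injective).to_subtype

theorem mem_range_ratCode (x : ℕ) : x ∈ Set.range ratCode ↔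
    0 < x.unpair.2 ∧ (Denumerable.ofNat ℤ x.unpair.1).natAbs.Coprime x.unpair.2 := by
  refine ⟨?_, fun ⟨hpos, hcoprime⟩ => ⟨⟨_, _, hpos.ne', hcoprime⟩, ?_⟩⟩
  · rintro ⟨q, rfl⟩
    simpa only [ratCode, Nat.unpair_pair, Denumerable.ofNat_encode] using ⟨q.den_pos, q.reduced⟩
  · simp only [ratCode, Denumerable.encode_ofNat, Nat.pair_unpair]

theorem computablePred_range_ratCode : ComputablePred (· ∈ Set.range ratCode) := by
  have hpos : ComputablePred fun x : ℕ => 0 < x.unpair.2 :=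
    computablePred_lt (by fun_prop) (by fun_prop)
  have hofNat := Computable.ofNat ℤ
  have hcoprime := computablePred_comp primrecRel_coprime.computablePred
    (f := fun x : ℕ => ((Denumerable.ofNat ℤ x.unpair.1).natAbs, x.unpair.2)) (by fun_prop)
  exact (computablePred_and hpos hcoprime).of_eq fun x => (mem_range_ratCode x).symm

instance : DecidablePred (· ∈ Set.range ratCode) :=
  (Rat.instEncodable : Encodable ℚ).decidableRangeEncode

theorem ratCode_ofNat (n : ℕ) :
    ratCode (Denumerable.ofNat ℚ n) = Nat.Subtype.ofNat (Set.range ratCode) n := by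
  have : @Encodable.equivRangeEncode ℚ Rat.instEncodable (Denumerable.ofNat ℚ n) =
      Nat.Subtype.ofNat (Set.range ratCode) n :=
    (Equiv.eq_symm_apply _).1 rfl
  exact congrArg Subtype.val this

theorem computable_ratCode : Computable ratCode :=
  ((computable_subtype_ofNat computablePred_range_ratCode).comp Computable.encode).of_eq
    fun q => by rw [← ratCode_ofNat, Denumerable.ofNat_encode]

@[fun_prop]
theorem computable_num : Computable Rat.num :=
  ((Computable.ofNat ℤ).comp (computable_fst (computable_unpair computable_ratCode))).of_eq
    fun q => by simp only [ratCode, Nat.unpair_pair, Denumerable.ofNat_encode]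

@[fun_prop]
theorem computable_den : Computable Rat.den :=
  (computable_snd (computable_unpair computable_ratCode)).of_eq
    fun q => by simp only [ratCode, Nat.unpair_pair]

theorem rat_eq_sub_div_iff (q : ℚ) (a b : ℕ) {c : ℕ} (hc : 0 < c) :
    q = ((a : ℚ) - b) / c ↔
      q.num.toNat * c + b * q.den = a * q.den + (q.num.natAbs - q.num.toNat) * c := by
  have num_eq : (q.num : ℚ) = (q.num.toNat : ℚ) - ((q.num.natAbs - q.num.toNat : ℕ) : ℚ) := by
    exact_mod_cast (by omega : q.num = (q.num.toNat : ℤ) - ((q.num.natAbs - q.num.toNat : ℕ) : ℤ))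
  have hc' : (c : ℚ) ≠ 0 := by positivity
  rw [← Nat.cast_inj (R := ℚ), eq_div_iff hc', ← mul_left_inj' (Nat.cast_ne_zero.2 q.den_nz),
    mul_right_comm, Rat.mul_den_eq_num, num_eq]
  push_cast
  constructor <;> intro h <;> linarith

theorem computable_sub_div {α : Type*} [Primcodable α] {a b c : α → ℕ} (ha : Computable a)
    (hb : Computable b) (hc : Computable c) (hc_pos : ∀ x, 0 < c x) :
    Computable fun x => ((a x : ℚ) - b x) / c x := by
  classical
  have hofNat := Computable.ofNat ℚ
  have exists_index (x : α) : ∃ m, Denumerable.ofNat ℚ m = ((a x : ℚ) - b x) / c x :=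
    ⟨_, Denumerable.ofNat_encode _⟩
  have hsearch : ComputablePred fun p : α × ℕ =>
      Denumerable.ofNat ℚ p.2 = ((a p.1 : ℚ) - b p.1) / c p.1 :=
    (computablePred_eq (by fun_prop) (by fun_prop)).of_eq
      fun p => (rat_eq_sub_div_iff _ _ _ (hc_pos p.1)).symm
  exact (hofNat.comp (Computable.find hsearch exists_index)).of_eq
    fun x => Nat.find_spec (exists_index x)

end RationalComputability

section UniformComputability

variable {α : Type*} [Primcodable α]

theorem computable_sum_range {k : α → ℕ} {f : α → ℕ → ℕ} (hk : Computable k)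
    (hf : Computable fun p : α × ℕ => f p.1 p.2) :
    Computable fun x => ∑ i ∈ Finset.range (k x), f x i := by
  have step : Computable fun p : α × ℕ × ℕ => p.2.2 + f p.1 p.2.1 := by fun_prop
  refine (Computable.nat_rec hk (.const 0) step.to₂).of_eq fun x => ?_
  induction k x with
  | zero => rfl
  | succ n ih => rw [Finset.sum_range_succ, ← ih]

/-- A family of reals, necessarily nonnegative, is uniformly computable if a natural number within
distance `2` of `N * f x` can be computed from `x` and the precision `N`. The slack `2` leaves room
for one rounding to an integer. -/
def UniformlyComputable (f : α → ℝ) : Prop :=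
  ∃ a : α → ℕ → ℕ, Computable (fun p : α × ℕ => a p.1 p.2) ∧ ∀ x N, |(a x N : ℝ) - N * f x| ≤ 2

theorem toNat_num_div_den (q : ℚ) : (q.num.toNat : ℝ) / q.den = max (q : ℝ) 0 := by
  have toNat_eq : (q.num.toNat : ℚ) = max (q.num : ℚ) 0 := by
    exact_mod_cast congrArg (Int.cast (R := ℚ)) (Int.toNat_eq_max q.num)
  have : (q.num.toNat : ℚ) / q.den = max q 0 := by
    rw [div_eq_iff (Nat.cast_ne_zero.2 q.den_nz), max_mul_of_nonneg _ _ (by positivity), zero_mul,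
      Rat.mul_den_eq_num, toNat_eq]
  simpa using congrArg (Rat.cast (K := ℝ)) this

theorem le_one_add_mul_of_pow_le {x y B ε : ℝ} {n : ℕ} (hn : n ≠ 0) (hx : 0 ≤ x) (hy : 0 ≤ y)
    (hε : 0 ≤ ε) (hB : B ≤ (1 + ε) ^ n) (h : x ^ n ≤ B * y ^ n) : x ≤ (1 + ε) * y := by
  refine (pow_le_pow_iff_left₀ hx (by positivity) hn).1 (h.trans ?_)
  rw [mul_pow]
  gcongr

theorem abs_sub_le_two_of_isLeast_root {f : ℝ} {B K N u v a : ℕ} (hB : 0 < B) (hv : 0 < v)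
    (hf_nonneg : 0 ≤ f) (hf_le : f ≤ K) (hle : u ≤ B * f ^ (B * (N * K + 1)) * v)
    (hge : f ^ (B * (N * K + 1)) * v ≤ B * u)
    (ha : IsLeast {a | u * N ^ (B * (N * K + 1)) ≤ a ^ (B * (N * K + 1)) * v} a) :
    |(a : ℝ) - N * f| ≤ 2 := by
  set n := B * (N * K + 1) with hn_def
  have hn : n ≠ 0 := by positivity
  set ε : ℝ := 1 / (N * K + 1) with hε_def
  have hε_nonneg : 0 ≤ ε := by positivity
  have hε_le : ε ≤ 1 := div_le_one_of_le₀ (le_add_of_nonneg_left (by positivity)) (by positivity)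
  have B_le : (B : ℝ) ≤ (1 + ε) ^ n := by
    have bernoulli := one_add_mul_le_pow (by linarith : -2 ≤ ε) n
    have : (n : ℝ) * ε = B := by rw [hn_def, hε_def]; push_cast; field_simp
    linarith
  have slack : ε * (N * f) ≤ 1 := by
    rw [hε_def, one_div_mul_eq_div, div_le_one (by positivity)]
    nlinarith [mul_le_mul_of_nonneg_left hf_le (Nat.cast_nonneg (α := ℝ) N)]
  have hv' : (0 : ℝ) < v := by exact_mod_cast hv
  have upper : N * f ≤ (1 + ε) * a := by
    refine le_one_add_mul_of_pow_le hn (by positivity) (by positivity) hε_nonneg B_le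
      (le_of_mul_le_mul_right ?_ hv')
    have ha_mem : (u * N ^ n : ℝ) ≤ a ^ n * v := by exact_mod_cast ha.1
    calc ((N * f) ^ n * v : ℝ) = N ^ n * (f ^ n * v) := by ring
      _ ≤ N ^ n * (B * u) := by gcongr
      _ = B * (u * N ^ n) := by ring
      _ ≤ B * (a ^ n * v) := by gcongr
      _ = B * a ^ n * v := by ring
  have lower : a - 1 ≤ (1 + ε) * (N * f) := by
    obtain _ | b := a
    · exact (by simp : ((0 : ℕ) : ℝ) - 1 ≤ 0).trans (by positivity)
    push_cast
    rw [add_sub_cancel_right]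
    refine le_one_add_mul_of_pow_le hn (by positivity) (by positivity) hε_nonneg B_le
      (le_of_mul_le_mul_right ?_ hv')
    have hb : (b ^ n * v : ℝ) ≤ u * N ^ n := by
      exact_mod_cast (not_le.1 fun h => (Nat.lt_succ_self b).not_ge (ha.2 h)).le
    calc (b ^ n * v : ℝ) ≤ u * N ^ n := hb
      _ ≤ B * f ^ n * v * N ^ n := by gcongr
      _ = B * (N * f) ^ n * v := by ring
  rw [abs_le]
  constructor <;> nlinarith [hε_le]

namespace UniformlyComputable

theorem of_div {f : α → ℝ} {u v : α → ℕ → ℕ} (hu : Computable fun p : α × ℕ => u p.1 p.2)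
    (hv : Computable fun p : α × ℕ => v p.1 p.2)
    (h : ∀ x N, |(u x N : ℝ) / v x N - N * f x| ≤ 1) : UniformlyComputable f := by
  refine ⟨fun x N => u x N / v x N, computable_div hu hv, fun x N => ?_⟩
  have floor_le : ((u x N / v x N : ℕ) : ℝ) ≤ u x N / v x N := Nat.cast_div_le
  have lt_floor : (u x N : ℝ) / v x N < (u x N / v x N : ℕ) + 1 := by
    rw [← Nat.floor_div_eq_div (K := ℝ)]
    exact Nat.lt_floor_add_one _
  have := abs_le.1 (h x N)
  rw [abs_le]
  constructor <;> linarith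

theorem const {Q : ℝ} (hQ : 0 ≤ Q) (hQc : ComputableReal Q) :
    UniformlyComputable fun _ : α => Q := by
  obtain ⟨q, hq, hq_approx⟩ := hQc
  refine of_div (u := fun _ N => N * (q (N + 1)).num.toNat) (v := fun _ N => (q (N + 1)).den)
    (by fun_prop) (by fun_prop) fun _ N => ?_
  set r := q (N + 1)
  have close : |(r : ℝ) - Q| < 1 / (N + 1) := by
    rw [abs_sub_comm]
    exact_mod_cast hq_approx (N + 1) (by omega)
  calc |((N * r.num.toNat : ℕ) : ℝ) / r.den - N * Q|
      = N * |max (r : ℝ) 0 - max Q 0| := by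
        rw [Nat.cast_mul, mul_div_assoc, toNat_num_div_den, max_eq_left hQ, ← mul_sub, abs_mul,
          Nat.abs_cast]
    _ ≤ N * (1 / (N + 1)) := by
        gcongr
        exact (abs_max_sub_max_le_abs _ _ _).trans close.le
    _ ≤ 1 := by rw [mul_one_div, div_le_one (by positivity)]; linarith

theorem inv {f : α → ℝ} {m : α → ℕ} (hf : UniformlyComputable f) (hm : Computable m)
    (hf_ge : ∀ x, 1 ≤ m x * f x) : UniformlyComputable fun x => (f x)⁻¹ := by
  obtain ⟨a, ha, ha_approx⟩ := hf
  let K (x : α) (N : ℕ) : ℕ := m x * (2 * N * m x + 3)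
  refine of_div (u := fun x N => N * K x N) (v := fun x N => a x (K x N))
    (by fun_prop) (by fun_prop) fun x N => ?_
  have f_pos : 0 < f x := by
    by_contra! h
    linarith [hf_ge x, mul_nonpos_of_nonneg_of_nonpos (m x).cast_nonneg h]
  have approx := ha_approx x (K x N)
  have a_ge : 2 * N * m x + 1 ≤ (a x (K x N) : ℝ) := by
    have := mul_le_mul_of_nonneg_left (hf_ge x) (by positivity : (0 : ℝ) ≤ 2 * N * m x + 3)
    have := (abs_le.1 approx).1
    simp only [K] at *
    push_cast at *
    linarith
  have a_pos : (0 : ℝ) < a x (K x N) := lt_of_lt_of_le (by positivity) a_ge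
  calc |((N * K x N : ℕ) : ℝ) / a x (K x N) - N * (f x)⁻¹|
      = N * |(a x (K x N) : ℝ) - K x N * f x| / (a x (K x N) * f x) := by
        rw [← abs_of_pos (mul_pos a_pos f_pos), ← Nat.abs_cast N, ← abs_mul, ← abs_div,
          abs_sub_comm]
        congr 1
        simp only [Nat.abs_cast]
        push_cast
        field_simp
    _ ≤ N * 2 / (a x (K x N) * f x) := by gcongr
    _ ≤ 1 := by
        rw [div_le_one (by positivity)]
        nlinarith [hf_ge x]

/-- Extracting `n`-th roots turns a fixed factor `B` into `1 + 1 / (N * K + 1)` once `n` is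
`B * (N * K + 1)`, by Bernoulli's inequality. -/
theorem of_pow {f : α → ℝ} {B K : α → ℕ} {u v : α → ℕ → ℕ} (hB : Computable B)
    (hK : Computable K) (hu : Computable fun p : α × ℕ => u p.1 p.2)
    (hv : Computable fun p : α × ℕ => v p.1 p.2) (hv_pos : ∀ x n, 0 < v x n)
    (hf_nonneg : ∀ x, 0 ≤ f x) (hf_le : ∀ x, f x ≤ K x) (hB_pos : ∀ x, 0 < B x)
    (hle : ∀ x n, n ≠ 0 → u x n ≤ B x * f x ^ n * v x n)
    (hge : ∀ x n, n ≠ 0 → f x ^ n * v x n ≤ B x * u x n) : UniformlyComputable f := by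
  classical
  let n (p : α × ℕ) : ℕ := B p.1 * (p.2 * K p.1 + 1)
  have n_ne (p : α × ℕ) : n p ≠ 0 := by have := hB_pos p.1; positivity
  let IsUpperRoot (p : α × ℕ) (a : ℕ) : Prop := u p.1 (n p) * p.2 ^ n p ≤ a ^ n p * v p.1 (n p)
  have exists_root (p : α × ℕ) : ∃ a, IsUpperRoot p a := ⟨u p.1 (n p) * p.2, by
    simp only [IsUpperRoot, mul_pow]
    exact (Nat.mul_le_mul_right _ (Nat.le_self_pow (n_ne p) _)).trans
      (Nat.le_mul_of_pos_right _ (hv_pos _ _))⟩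
  have hsearch : Computable fun p => Nat.find (exists_root p) :=
    Computable.find (P := IsUpperRoot) (computablePred_le (by fun_prop) (by fun_prop)) exists_root
  refine ⟨fun x N => Nat.find (exists_root (x, N)), hsearch, fun x N => ?_⟩
  exact abs_sub_le_two_of_isLeast_root (hB_pos x) (hv_pos x _) (hf_nonneg x) (hf_le x)
    (hle x _ (n_ne (x, N))) (hge x _ (n_ne (x, N)))
    ⟨Nat.find_spec (exists_root (x, N)), fun _ => Nat.find_min' (exists_root (x, N))⟩

end UniformlyComputable

end UniformComputability

section LengthWeight

/-- The weight `l ^ Q * 2 ^ (-l / T)` that a program of length `l` contributes to `W(Q,T)`. -/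
noncomputable def lengthWeight (Q T : ℝ) (l : ℕ) : ℝ := (l : ℝ) ^ Q * (2 : ℝ) ^ (-(l : ℝ) / T)

theorem lengthWeight_nonneg (Q T : ℝ) (l : ℕ) : 0 ≤ lengthWeight Q T l := by
  unfold lengthWeight
  positivity

theorem lengthWeight_le_pow {Q T : ℝ} (hQ : 0 < Q) (hT : 0 < T) (l : ℕ) :
    lengthWeight Q T l ≤ (l ^ ⌈Q⌉₊ : ℕ) := by
  obtain rfl | hl := l.eq_zero_or_pos
  · simp [lengthWeight, Real.zero_rpow hQ.ne']
  have hl' : (1 : ℝ) ≤ l := by exact_mod_cast hl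
  have rpow_le : (l : ℝ) ^ Q ≤ (l : ℝ) ^ (⌈Q⌉₊ : ℝ) :=
    Real.rpow_le_rpow_of_exponent_le hl' (Nat.le_ceil Q)
  have two_rpow_le : (2 : ℝ) ^ (-(l : ℝ) / T) ≤ 1 :=
    Real.rpow_le_one_of_one_le_of_nonpos one_le_two (div_nonpos_of_nonpos_of_nonneg (by simp) hT.le)
  calc lengthWeight Q T l ≤ (l : ℝ) ^ (⌈Q⌉₊ : ℝ) * 1 := by unfold lengthWeight; gcongr
    _ = (l ^ ⌈Q⌉₊ : ℕ) := by simp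

theorem lengthWeight_pow_mul (Q T : ℝ) (l n e : ℕ) :
    lengthWeight Q T l ^ n * (2 : ℝ) ^ e =
      (l : ℝ) ^ (n * Q) * (2 : ℝ) ^ (e - (l * n : ℕ) * T⁻¹) := by
  rw [lengthWeight, mul_pow, ← Real.rpow_mul_natCast (by positivity),
    ← Real.rpow_mul_natCast (by positivity), mul_assoc, ← Real.rpow_natCast 2 e,
    ← Real.rpow_add two_pos, mul_comm Q]
  congr 2
  push_cast
  ring

theorem pow_le_lengthWeight_pow {Q T : ℝ} (l n : ℕ) {a e : ℕ} (ha : a - n * Q ≤ 2)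
    (he : -2 ≤ e - (l * n : ℕ) * T⁻¹) :
    (l : ℝ) ^ (a + 1) ≤ (4 * (l + 1) ^ 3 : ℕ) * lengthWeight Q T l ^ n * (2 ^ e : ℕ) := by
  obtain rfl | hl := l.eq_zero_or_pos
  · have := lengthWeight_nonneg Q T 0
    simp only [Nat.cast_zero, zero_pow a.succ_ne_zero]
    positivity
  have hl' : (1 : ℝ) ≤ l := by exact_mod_cast hl
  have quarter_le : (4 : ℝ)⁻¹ ≤ (2 : ℝ) ^ (e - (l * n : ℕ) * T⁻¹) :=
    calc (4 : ℝ)⁻¹ = 2 ^ (-2 : ℝ) := by norm_num [Real.rpow_neg]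
      _ ≤ _ := Real.rpow_le_rpow_of_exponent_le one_le_two he
  calc (l : ℝ) ^ (a + 1) = (l : ℝ) ^ ((a + 1 : ℕ) : ℝ) := (Real.rpow_natCast _ _).symm
    _ ≤ (l : ℝ) ^ ((3 : ℕ) + n * Q) :=
        Real.rpow_le_rpow_of_exponent_le hl' (by push_cast; linarith)
    _ = 4 * (l : ℝ) ^ 3 * ((l : ℝ) ^ (n * Q) * 4⁻¹) := by
        rw [Real.rpow_add (by positivity), Real.rpow_natCast]; ring
    _ ≤ 4 * (l + 1 : ℝ) ^ 3 * ((l : ℝ) ^ (n * Q) * (2 : ℝ) ^ (e - (l * n : ℕ) * T⁻¹)) := by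
        gcongr; linarith
    _ = _ := by rw [← lengthWeight_pow_mul]; push_cast; ring

theorem lengthWeight_pow_le_pow {Q T : ℝ} (hQ : 0 < Q) (l : ℕ) {n : ℕ} (hn : n ≠ 0) {a e : ℕ}
    (ha : n * Q ≤ a + 2) (he : e - (l * n : ℕ) * T⁻¹ ≤ 2) :
    lengthWeight Q T l ^ n * (2 ^ e : ℕ) ≤ (4 * (l + 1) ^ 3 : ℕ) * (l : ℝ) ^ (a + 1) := by
  obtain rfl | hl := l.eq_zero_or_pos
  · simp [lengthWeight, Real.zero_rpow hQ.ne', hn]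
  have hl' : (1 : ℝ) ≤ l := by exact_mod_cast hl
  have le_four : (2 : ℝ) ^ (e - (l * n : ℕ) * T⁻¹) ≤ 4 :=
    calc (2 : ℝ) ^ (e - (l * n : ℕ) * T⁻¹) ≤ 2 ^ (2 : ℝ) :=
          Real.rpow_le_rpow_of_exponent_le one_le_two he
      _ = 4 := by norm_num
  have l_le : (l : ℝ) ≤ (l + 1) ^ 3 := by nlinarith [sq_nonneg (l : ℝ)]
  calc lengthWeight Q T l ^ n * (2 ^ e : ℕ)
      = (l : ℝ) ^ (n * Q) * (2 : ℝ) ^ (e - (l * n : ℕ) * T⁻¹) := by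
        rw [← lengthWeight_pow_mul]; push_cast; rfl
    _ ≤ (l : ℝ) ^ ((a + 2 : ℕ) : ℝ) * 4 := by
        gcongr
        exact_mod_cast ha
    _ = 4 * l * (l : ℝ) ^ (a + 1) := by rw [Real.rpow_natCast]; ring
    _ ≤ 4 * (l + 1) ^ 3 * (l : ℝ) ^ (a + 1) := by gcongr
    _ = _ := by push_cast; rfl

theorem uniformlyComputable_lengthWeight {Q T : ℝ} (hQ : 0 < Q) (hQc : ComputableReal Q)
    (hT : 0 < T) (hTc : ComputableReal T) : UniformlyComputable (lengthWeight Q T) := by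
  obtain ⟨m, hm⟩ := exists_nat_ge T⁻¹
  have one_le : 1 ≤ m * T := (inv_le_iff_one_le_mul₀ hT).1 hm
  obtain ⟨a, ha, ha_approx⟩ := UniformlyComputable.const (α := Unit) hQ.le hQc
  obtain ⟨e, he, he_approx⟩ := (UniformlyComputable.const (α := Unit) hT.le hTc).inv
    (m := fun _ => m) (.const m) fun _ => one_le
  refine UniformlyComputable.of_pow (B := fun l => 4 * (l + 1) ^ 3) (K := fun l => l ^ ⌈Q⌉₊)
    (u := fun l n => l ^ (a () n + 1)) (v := fun l n => 2 ^ e () (l * n)) (by fun_prop)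
    (by fun_prop) (by fun_prop) (by fun_prop) (fun l n => by positivity) (lengthWeight_nonneg Q T)
    (lengthWeight_le_pow hQ hT) (fun l => by positivity) (fun l n _ => ?_) fun l n hn => ?_
  · push_cast [← Nat.cast_pow 2]
    exact_mod_cast pow_le_lengthWeight_pow l n (abs_le.1 (ha_approx () n)).2
      (abs_le.1 (he_approx () (l * n))).1
  · exact_mod_cast lengthWeight_pow_le_pow hQ l hn (by linarith [(abs_le.1 (ha_approx () n)).1])
      (abs_le.1 (he_approx () (l * n))).2

end LengthWeight

section Limits

variable {α β : Type*} [Primcodable α] [Primcodable β]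

namespace UniformlyComputable

theorem comp {f : β → ℝ} (hf : UniformlyComputable f) {g : α → β} (hg : Computable g) :
    UniformlyComputable fun x => f (g x) := by
  obtain ⟨a, ha, ha_approx⟩ := hf
  exact ⟨fun x => a (g x), by fun_prop, fun x => ha_approx (g x)⟩

theorem option_elim {f : β → ℝ} (hf : UniformlyComputable f) {e : α → Option β}
    (he : Computable e) : UniformlyComputable fun x => (e x).elim 0 f := by
  obtain ⟨a, ha, ha_approx⟩ := hf
  refine ⟨fun x N => (e x).elim 0 (a · N), ?_, fun x N => ?_⟩
  · have some_case : Computable fun p : (α × ℕ) × β => a p.2 p.1.2 := by fun_prop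
    exact (Computable.option_casesOn (he.comp .fst) (.const 0) some_case.to₂).of_eq
      fun p => by cases h : e p.1 <;> simp only [h, Option.elim]
  · cases h : e x with
    | none => simp [h]
    | some y => simpa only [h, Option.elim] using ha_approx y N

theorem sum_range {f : ℕ → ℝ} (hf : UniformlyComputable f) :
    UniformlyComputable fun k => ∑ i ∈ Finset.range k, f i := by
  obtain ⟨a, ha, ha_approx⟩ := hf
  refine of_div (u := fun k N => ∑ i ∈ Finset.range k, a i (N * (2 * k + 1)))
    (v := fun k _ => 2 * k + 1) (computable_sum_range (by fun_prop) (by fun_prop)) (by fun_prop)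
    fun k N => ?_
  have total_error : |((∑ i ∈ Finset.range k, a i (N * (2 * k + 1)) : ℕ) : ℝ) -
      (2 * k + 1 : ℕ) * (N * ∑ i ∈ Finset.range k, f i)| ≤ 2 * k :=
    calc _ = |∑ i ∈ Finset.range k,
            ((a i (N * (2 * k + 1)) : ℝ) - (N * (2 * k + 1) : ℕ) * f i)| := by
          rw [Finset.sum_sub_distrib, ← Finset.mul_sum]
          push_cast
          ring_nf
      _ ≤ ∑ i ∈ Finset.range k, 2 :=
          (Finset.abs_sum_le_sum_abs _ _).trans (Finset.sum_le_sum fun i _ => ha_approx i _)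
      _ = 2 * k := by simp [mul_comm]
  rw [div_sub' (by positivity), abs_div, div_le_one (by positivity), Nat.abs_cast]
  exact total_error.trans (by push_cast; linarith)

end UniformlyComputable

theorem leftComputable_of_tendsto {S : ℕ → ℝ} {T : ℝ} (hS : UniformlyComputable S)
    (hle : ∀ k, S k ≤ T) (hlim : Tendsto S atTop (nhds T)) : LeftComputable T := by
  obtain ⟨a, ha, ha_approx⟩ := hS
  refine ⟨fun k => ((2 : ℕ) - (a k (k + 1) : ℚ)) / (k + 1 : ℕ),
    computable_sub_div (.const 2) (by fun_prop) (by fun_prop) (by simp), fun k => ?_, ?_⟩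
  · have := (abs_le.1 (ha_approx k (k + 1))).2
    push_cast at this ⊢
    rw [le_div_iff₀ (by positivity)]
    nlinarith [hle k]
  · refine tendsto_of_tendsto_of_dist hlim.neg (squeeze_zero (fun _ => dist_nonneg) (fun k => ?_)
      (by simpa using (tendsto_one_div_add_atTop_nhds_zero_nat (𝕜 := ℝ)).const_mul 4))
    have := abs_le.1 (ha_approx k (k + 1))
    push_cast at this ⊢
    rw [Real.dist_eq, sub_div' (by positivity), abs_div,
      abs_of_pos (by positivity : (0 : ℝ) < k + 1),
      ← div_eq_mul_inv, div_le_div_iff_of_pos_right (by positivity), abs_le]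
    constructor <;> linarith

end Limits

section BinaryExpansions

/-- The natural number with binary expansion `s`, most significant digit first. -/
def binaryValue (s : List Bool) : ℕ := s.foldl (fun a b => 2 * a + b.toNat) 0

@[fun_prop]
theorem computable_binaryValue : Computable binaryValue :=
  (Primrec.list_foldl (h := fun _ (p : ℕ × Bool) => 2 * p.1 + p.2.toNat) .id (.const 0)
    (Primrec.nat_add.comp (Primrec.nat_mul.comp (.const 2) (.comp .fst .snd))
      ((Primrec.dom_finite Bool.toNat).comp (.comp .snd .snd)))).to_comp

/-- The `n` least significant binary digits of `m`, most significant digit first. -/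
def lowBits (n m : ℕ) : List Bool :=
  (List.range n).map fun i => decide (m / 2 ^ (n - (i + 1)) % 2 = 1)

theorem computable_lowBits {α : Type*} [Primcodable α] {f g : α → ℕ} (hf : Computable f)
    (hg : Computable g) : Computable fun a => lowBits (f a) (g a) := by
  have digit : Primrec₂ fun (p : ℕ × ℕ) i => decide (p.2 / 2 ^ (p.1 - (i + 1)) % 2 = 1) :=
    (Primrec.eq.comp (Primrec.nat_mod.comp (Primrec.nat_div.comp (.comp .snd .fst)
      ((Primrec₂.unpaired'.1 Nat.Primrec.pow).comp (.const 2)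
        (Primrec.nat_sub.comp (.comp .fst .fst) (Primrec.succ.comp .snd)))) (.const 2))
      (.const 1)).decide
  exact ((Primrec.list_map (Primrec.list_range.comp .fst) digit).to_comp.comp (hf.pair hg) :)

theorem floor_mul_two_pow {x : ℝ} (hx : 0 ≤ x) (n : ℕ) :
    ⌊x * 2 ^ n⌋₊ = ⌊x⌋₊ * 2 ^ n + ⌊Int.fract x * 2 ^ n⌋₊ := by
  have : x * 2 ^ n = Int.fract x * 2 ^ n + (⌊x⌋₊ * 2 ^ n : ℕ) := by
    rw [Nat.cast_mul, natCast_floor_eq_intCast_floor hx]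
    push_cast
    rw [← add_mul, Int.fract_add_floor]
  rw [this, Nat.floor_add_natCast (by have := Int.fract_nonneg x; positivity), add_comm]

theorem binDigit_eq_decide (x : ℝ) (n : ℕ) :
    binDigit x n = decide (⌊Int.fract x * 2 ^ n⌋₊ % 2 = 1) := by
  have : 0 ≤ Int.fract x * 2 ^ n := by have := Int.fract_nonneg x; positivity
  rw [binDigit, ← Int.natCast_floor_eq_floor this]
  norm_cast

theorem length_bits (x : ℝ) (n : ℕ) : (bits x n).length = n := by simp [bits]

theorem binaryValue_bits (x : ℝ) (n : ℕ) : binaryValue (bits x n) = ⌊Int.fract x * 2 ^ n⌋₊ := by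
  induction n with
  | zero => simp [bits, binaryValue, Nat.floor_eq_zero.2 (Int.fract_lt_one x)]
  | succ n ih =>
    have half : ⌊Int.fract x * 2 ^ (n + 1)⌋₊ / 2 = ⌊Int.fract x * 2 ^ n⌋₊ := by
      rw [← Nat.floor_div_ofNat, pow_succ, ← mul_assoc, mul_div_cancel_right₀ _ two_ne_zero]
    have append_bit (s : List Bool) (b : Bool) :
        binaryValue (s ++ [b]) = 2 * binaryValue s + b.toNat := by
      simp [binaryValue]
    have bits_succ : bits x (n + 1) = bits x n ++ [binDigit x (n + 1)] := by
      simp [bits, List.range_succ]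
    rw [bits_succ, append_bit, ih, binDigit_eq_decide, ← half]
    rcases Nat.mod_two_eq_zero_or_one ⌊Int.fract x * 2 ^ (n + 1)⌋₊ with h | h <;>
      simp [h] <;> omega

theorem bits_eq_lowBits {x : ℝ} (hx : 0 ≤ x) (n : ℕ) : bits x n = lowBits n ⌊x * 2 ^ n⌋₊ := by
  refine List.map_congr_left fun i hi => ?_
  have hi := List.mem_range.1 hi
  have shift : ⌊x * 2 ^ n⌋₊ / 2 ^ (n - (i + 1)) = ⌊x * 2 ^ (i + 1)⌋₊ := by
    have : x * 2 ^ n = x * 2 ^ (i + 1) * 2 ^ (n - (i + 1)) := by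
      rw [mul_assoc, ← pow_add, Nat.add_sub_cancel' hi]
    rw [← Nat.floor_div_natCast, Nat.cast_pow, Nat.cast_two, this,
      mul_div_cancel_right₀ _ (by positivity)]
  have even : 2 ∣ ⌊x⌋₊ * 2 ^ (i + 1) := (dvd_pow_self 2 i.succ_ne_zero).mul_left _
  rw [shift, floor_mul_two_pow hx, binDigit_eq_decide, Nat.add_mod,
    Nat.mod_eq_zero_of_dvd even, zero_add, Nat.mod_mod]

/-- The constant `6` is twice the slack `2` of `UniformlyComputable`, plus `1` for the distance from
`2 ^ n * T` at which a stage is sought and `1` for rounding `2 ^ n * T` down. -/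
theorem exists_partrec_stage {S : ℕ → ℝ} {T : ℝ} (hS : UniformlyComputable S) (hT : 0 ≤ T)
    (hlim : Tendsto S atTop (nhds T)) :
    ∃ σ : List Bool →. ℕ, Partrec σ ∧ ∀ n, ∃ k ∈ σ (bits T n), 2 ^ n * (T - S k) < 6 := by
  obtain ⟨a, ha, ha_approx⟩ := hS
  let IsStage (s : List Bool) (k : ℕ) : Prop :=
    ⌊T⌋₊ * 2 ^ s.length + binaryValue s < a k (2 ^ s.length) + 3
  have hIsStage : ComputablePred fun p : List Bool × ℕ => IsStage p.1 p.2 :=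
    computablePred_lt (by fun_prop) (by fun_prop)
  refine ⟨fun s => Nat.rfind fun k => Part.some (decide (IsStage s k)),
    Partrec.rfind hIsStage.decide, fun n => ?_⟩
  have isStage_iff (k : ℕ) : IsStage (bits T n) k ↔ ⌊T * 2 ^ n⌋₊ < a k (2 ^ n) + 3 := by
    simp only [IsStage, length_bits, binaryValue_bits, ← floor_mul_two_pow hT]
  have exists_stage : ∃ k, IsStage (bits T n) k := by
    obtain ⟨k, hk⟩ := (hlim.eventually_const_lt
      (sub_lt_self T (by positivity : (0 : ℝ) < 1 / 2 ^ n))).exists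
    refine ⟨k, (isStage_iff k).2 ?_⟩
    have approx := (abs_le.1 (ha_approx k (2 ^ n))).1
    have := mul_lt_mul_of_pos_left hk (by positivity : (0 : ℝ) < 2 ^ n)
    rw [mul_sub, mul_one_div_cancel (by positivity)] at this
    rw [Nat.floor_lt (by positivity)]
    push_cast at approx ⊢
    linarith
  obtain ⟨k, hk⟩ := Part.dom_iff_mem.1
    (Nat.rfind_dom (p := fun k => Part.some (decide (IsStage (bits T n) k))) |>.2
      ⟨exists_stage.choose, by simpa using exists_stage.choose_spec, fun _ => trivial⟩)
  refine ⟨k, hk, ?_⟩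
  have isStage_k : IsStage (bits T n) k := by simpa using Nat.rfind_spec hk
  have floor_lt : (⌊T * 2 ^ n⌋₊ : ℝ) < a k (2 ^ n) + 3 := by
    exact_mod_cast (isStage_iff k).1 isStage_k
  have approx := (abs_le.1 (ha_approx k (2 ^ n))).2
  push_cast at approx
  linarith [Nat.lt_floor_add_one (T * 2 ^ n)]

end BinaryExpansions

section PrefixFreeCodes

namespace PrefixFree

variable {S : Set (List Bool)}

theorem mono {S' : Set (List Bool)} (hS : PrefixFree S) (h : S' ⊆ S) : PrefixFree S' :=
  fun p hp q hq => hS p (h hp) q (h hq)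

theorem uniquelyDecodable (hS : PrefixFree S) (h0 : [] ∉ S) :
    InformationTheory.UniquelyDecodable S := by
  have ne_nil {v : List Bool} {L : List (List Bool)} (hv : v ∈ S) : [] ≠ v ++ L.flatten := by
    intro h
    exact h0 ((List.append_eq_nil_iff.1 h.symm).1 ▸ hv)
  intro L₁
  induction L₁ with
  | nil =>
    rintro (_ | ⟨w, L₂⟩) _ h₂ heq
    · rfl
    · exact absurd heq (ne_nil (h₂ w List.mem_cons_self))
  | cons v L₁ ih =>
    rintro (_ | ⟨w, L₂⟩) h₁ h₂ heq
    · exact absurd heq.symm (ne_nil (h₁ v List.mem_cons_self))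
    · rw [List.forall_mem_cons] at h₁ h₂
      rw [List.flatten_cons, List.flatten_cons] at heq
      obtain rfl : v = w := by
        rcases List.prefix_or_prefix_of_prefix (heq ▸ List.prefix_append v _)
          (List.prefix_append w _) with h | h
        · exact hS v h₁.1 w h₂.1 h
        · exact (hS w h₂.1 v h₁.1 h).symm
      rw [ih L₂ h₁.2 h₂.2 (List.append_cancel_left heq)]

theorem summable_two_pow_neg_length (hS : PrefixFree S) (h0 : [] ∉ S) :
    Summable fun p : S => (1 / 2 : ℝ) ^ p.1.length := by
  refine summable_of_sum_le (c := 1) (fun _ => by positivity) fun F => ?_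
  have hF : (F.map (.subtype (· ∈ S)) : Set (List Bool)) ⊆ S := by
    simp
  have kraft := InformationTheory.kraft_mcmillan_inequality
    ((hS.mono hF).uniquelyDecodable fun h => h0 (hF h))
  simpa only [Finset.sum_map, Fintype.card_bool, Nat.cast_ofNat, Function.Embedding.subtype_apply]
    using kraft

end PrefixFree

end PrefixFreeCodes

section ProgramSizeComplexity

variable {U : Computer} {s p : List Bool}

theorem H_le_length (h : s ∈ U.f p) : H U s ≤ p.length :=
  Nat.sInf_le ⟨p, rfl, h⟩

namespace IsOptimal

theorem exists_program (hU : IsOptimal U) (s : List Bool) : ∃ p, s ∈ U.f p := by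
  let f : List Bool →. List Bool := fun p => bif decide (p = []) then Part.some s else Part.none
  have hf : Partrec f := Partrec.cond
    (Primrec.eq.decide.to_comp.comp Computable.id (Computable.const [])) (Computable.const s) .none
  have eq_nil {p : List Bool} (hp : (f p).Dom) : p = [] := by
    by_contra h
    simp [f, h] at hp
  obtain ⟨d, hd⟩ := hU ⟨f, hf, fun p hp q hq _ => by rw [eq_nil hp, eq_nil hq]⟩
  obtain ⟨p, -, hp⟩ := hd [] (by simp [f])
  exact ⟨p, hp s (by simp [f])⟩

theorem nil_notMem_domain (hU : IsOptimal U) : [] ∉ U.domain := by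
  intro h
  have output_nil (s : List Bool) : s ∈ U.f [] := by
    obtain ⟨p, hp⟩ := hU.exists_program s
    rwa [U.prefixFree [] h p hp.1 List.nil_prefix]
  exact absurd (Part.mem_unique (output_nil []) (output_nil [true])) (by simp)

theorem exists_program_length_eq (hU : IsOptimal U) (s : List Bool) :
    ∃ p, p.length = H U s ∧ s ∈ U.f p := by
  obtain ⟨p, hp⟩ := hU.exists_program s
  exact Nat.sInf_mem (s := {n | ∃ p : List Bool, p.length = n ∧ s ∈ U.f p}) ⟨_, p, rfl, hp⟩

theorem exists_H_le_length_add (hU : IsOptimal U) (C : Computer) :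
    ∃ d, ∀ p, ∀ s ∈ C.f p, H U s ≤ p.length + d := by
  obtain ⟨d, hd⟩ := hU C
  refine ⟨d, fun p s hs => ?_⟩
  obtain ⟨p', hlen, hp'⟩ := hd p hs.1
  exact (H_le_length (hp' s hs)).trans hlen

theorem exists_H_le_H_add (hU : IsOptimal U) {g : List Bool →. List Bool} (hg : Partrec g) :
    ∃ d, ∀ s, ∀ t ∈ g s, H U t ≤ H U s + d := by
  obtain ⟨d, hd⟩ := hU.exists_H_le_length_add
    ⟨fun p => (U.f p).bind g, U.partrec.bind (hg.comp Computable.snd).to₂,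
      U.prefixFree.mono fun p hp => hp.1⟩
  refine ⟨d, fun s t ht => ?_⟩
  obtain ⟨p, hlen, hp⟩ := hU.exists_program_length_eq s
  exact hlen ▸ hd p t (Part.mem_bind hp ht)

theorem exists_forall_H_le_H_add (hU : IsOptimal U) {ι : Type*} [Finite ι]
    {g : ι → List Bool →. List Bool} (hg : ∀ i, Partrec (g i)) :
    ∃ d, ∀ i s, ∀ t ∈ g i s, H U t ≤ H U s + d := by
  choose d hd using fun i => hU.exists_H_le_H_add (hg i)
  obtain ⟨m, hm⟩ := Finite.exists_le d
  exact ⟨m, fun i s t ht => (hd i s t ht).trans (Nat.add_le_add_left (hm i) _)⟩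

/-- The programs are the words `1 ^ j 0 s`, which form a prefix-free set since `j` determines the
length of `s`. -/
theorem exists_H_le_of_length_eq_mul (hU : IsOptimal U) (K : ℕ) :
    ∃ c, ∀ j s, s.length = K * j → H U s ≤ (K + 1) * j + c := by
  let J (p : List Bool) : ℕ := p.idxOf false
  have hJ : Computable J := (Primrec.list_idxOf.comp (.const false) .id).to_comp
  let IsCode (p : List Bool) : Prop := p.length = J p + 1 + K * J p
  have hIsCode : ComputablePred IsCode := computablePred_eq (by fun_prop) (by fun_prop)
  let f : List Bool →. List Bool := fun p =>
    bif decide (IsCode p) then Part.some (p.drop (J p + 1)) else Part.none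
  have hdrop : Computable fun p : List Bool => p.drop (J p + 1) :=
    Primrec.list_drop.to_comp.comp (by fun_prop) .id
  have hf : Partrec f := Partrec.cond hIsCode.decide hdrop .none
  have isCode_of_dom {p : List Bool} (hp : (f p).Dom) : IsCode p := by
    by_contra h
    simp [f, h] at hp
  have hfree : PrefixFree {p | (f p).Dom} := fun p hp q hq hpq => by
    have hp := isCode_of_dom hp
    have hJ_lt : J p < p.length := by simp only [IsCode] at hp; omega
    have hJ_eq : J q = J p := by
      obtain ⟨t, rfl⟩ := hpq
      exact List.idxOf_append_of_mem (List.idxOf_lt_length_iff.1 hJ_lt)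
    exact hpq.eq_of_length (by rw [hp, isCode_of_dom hq, hJ_eq])
  obtain ⟨d, hd⟩ := hU.exists_H_le_length_add ⟨f, hf, hfree⟩
  refine ⟨1 + d, fun j s hs => ?_⟩
  let p := List.replicate j true ++ false :: s
  have hJp : J p = j := by simp [J, p, List.idxOf_append_of_notMem]
  have hlen : p.length = j + 1 + K * j := by simp [p, hs]; omega
  have hdrop : p.drop (j + 1) = s := by simp [p, List.drop_append]
  calc H U s ≤ p.length + d := hd p s (by simp [f, IsCode, hJp, hlen, hdrop])
    _ = (K + 1) * j + (1 + d) := by rw [hlen]; ring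

end IsOptimal

end ProgramSizeComplexity

section GraphEnumerations

variable {α β : Type*}

/-- The value of `φ` at the input enumerated at step `i`, and `0` if there is none. -/
def enumTerm (e : ℕ → Option (α × β)) (φ : α → ℝ) (i : ℕ) : ℝ := (e i).elim 0 fun x => φ x.1

theorem enumTerm_of_eq_some {e : ℕ → Option (α × β)} (φ : α → ℝ) {i : ℕ} {a : α} {b : β}
    (h : e i = some (a, b)) : enumTerm e φ i = φ a := by
  simp [enumTerm, h]

theorem enumTerm_nonneg (e : ℕ → Option (α × β)) {φ : α → ℝ} (hφ : ∀ a, 0 ≤ φ a) (i : ℕ) :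
    0 ≤ enumTerm e φ i := by
  cases h : e i with
  | none => simp [enumTerm, h]
  | some x => simpa [enumTerm, h] using hφ x.1

variable [Primcodable α] [Primcodable β]

theorem exists_computable_stages {g : α →. β} (hg : Partrec g) :
    ∃ v : ℕ → α → Option β, Computable (fun p : ℕ × α => v p.1 p.2) ∧ (∀ a, v 0 a = none) ∧
      (∀ a, Monotone fun k => (v k a).isSome) ∧ ∀ a b, b ∈ g a ↔ ∃ k, v k a = some b := by
  obtain ⟨c, hc⟩ := Nat.Partrec.Code.exists_code.1 hg
  have eval_encode (a : α) : c.eval (Encodable.encode a) = (g a).map Encodable.encode := by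
    simp [hc]
  have decode_of_evaln {k a y} (h : y ∈ c.evaln k (Encodable.encode a)) :
      ∃ b ∈ g a, Encodable.decode y = some b := by
    have := Nat.Partrec.Code.evaln_sound h
    rw [eval_encode] at this
    obtain ⟨b, hb, rfl⟩ := (Part.mem_map_iff _).1 this
    exact ⟨b, hb, Encodable.encodek b⟩
  refine ⟨fun k a => (c.evaln k (Encodable.encode a)).bind Encodable.decode,
    Computable.option_bind ?_ (Computable.decode.comp .snd), fun a => ?_, fun a => ?_,
    fun a b => ⟨fun hb => ?_, ?_⟩⟩
  · exact Nat.Partrec.Code.primrec_evaln.to_comp.comp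
      ((Computable.fst.pair (.const c)).pair (Computable.encode.comp .snd))
  · simp [Nat.Partrec.Code.evaln]
  · refine fun k k' hk h => ?_
    obtain ⟨b, y, hy, hb⟩ := by
      simpa only [Option.isSome_iff_exists, Option.bind_eq_some_iff] using h
    simp [Option.mem_def.1 (Nat.Partrec.Code.evaln_mono hk hy), hb]
  · have : Encodable.encode b ∈ c.eval (Encodable.encode a) := by
      rw [eval_encode]
      exact Part.mem_map _ hb
    obtain ⟨k, hk⟩ := Nat.Partrec.Code.evaln_complete.1 this
    exact ⟨k, by simp [Option.mem_def.1 hk]⟩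
  · rintro ⟨k, hk⟩
    obtain ⟨y, hy, hyb⟩ := Option.bind_eq_some_iff.1 hk
    obtain ⟨b', hb', hyb'⟩ := decode_of_evaln hy
    rwa [Option.some_injective _ (hyb.symm.trans hyb')]

/-- `e` enumerates the graph of the partial function `g` computably and without repetitions; the
value `none` stands for a step at which nothing is enumerated. -/
structure IsGraphEnumeration (g : α →. β) (e : ℕ → Option (α × β)) : Prop where
  computable : Computable e
  mem_iff : ∀ a b, b ∈ g a ↔ ∃ i, e i = some (a, b)
  eq_of_eq_some : ∀ i j x, e i = some x → e j = some x → i = j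

/-- The step coded by `(m, k)` enumerates the input with code `m` if stage `k + 1` is the first one
to produce its value. -/
theorem exists_isGraphEnumeration {g : α →. β} (hg : Partrec g) :
    ∃ e, IsGraphEnumeration g e := by
  obtain ⟨v, hv, v_zero, v_mono, mem_iff⟩ := exists_computable_stages hg
  let new (k : ℕ) (a : α) : Option β := bif (v k a).isSome then none else v (k + 1) a
  have new_eq_some {k a b} : new k a = some b ↔ v k a = none ∧ v (k + 1) a = some b := by
    cases h : v k a <;> simp [new, h]
  let e (i : ℕ) : Option (α × β) :=
    (Encodable.decode₂ α i.unpair.1).bind fun a => (new i.unpair.2 a).map (a, ·)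
  have e_eq_some {i a b} : e i = some (a, b) ↔
      i.unpair.1 = Encodable.encode a ∧ new i.unpair.2 a = some b := by
    simp only [e, Option.bind_eq_some_iff, Option.map_eq_some_iff, Encodable.decode₂_eq_some,
      Prod.mk.injEq]
    constructor
    · rintro ⟨_, ha, _, hb, rfl, rfl⟩
      exact ⟨ha.symm, hb⟩
    · exact fun ⟨ha, hb⟩ => ⟨a, ha.symm, b, hb, rfl, rfl⟩
  refine ⟨e, ?_, fun a b => ?_, ?_⟩
  · have hnew : Computable fun p : ℕ × α => new p.1.unpair.2 p.2 :=
      Computable.cond (Primrec.option_isSome.to_comp.comp (by fun_prop)) (.const none) (by fun_prop)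
    exact Computable.option_bind (Primrec.decode₂.to_comp.comp (by fun_prop))
      (Computable.option_map hnew ((Computable.snd.comp .fst).pair .snd).to₂)
  · simp only [e_eq_some, new_eq_some]
    refine ⟨fun hb => ?_, fun ⟨i, _, _, hb⟩ => (mem_iff a b).2 ⟨_, hb⟩⟩
    obtain ⟨k, hk⟩ := (mem_iff a b).1 hb
    have exists_stage : ∃ k, (v k a).isSome := ⟨k, by simp [hk]⟩
    obtain ⟨b', hb'⟩ := Option.isSome_iff_exists.1 (Nat.find_spec exists_stage)
    obtain ⟨k', hk'⟩ := Nat.exists_eq_succ_of_ne_zero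
      (fun h => by simp [h, v_zero] at hb' : Nat.find exists_stage ≠ 0)
    have not_before : v k' a = none :=
      Option.not_isSome_iff_eq_none.1 (Nat.find_min exists_stage (hk' ▸ k'.lt_succ_self))
    obtain rfl := Part.mem_unique hb ((mem_iff a b').2 ⟨_, hb'⟩)
    exact ⟨Nat.pair (Encodable.encode a) k', by simp, by simpa, by simpa [hk'] using hb'⟩
  · rintro i j ⟨a, b⟩ hi hj
    rw [e_eq_some, new_eq_some] at hi hj
    have stage_le {k k' : ℕ} (h : v k a = none) (h' : v (k' + 1) a = some b) : k ≤ k' := by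
      by_contra! hlt
      have := v_mono a hlt (by simp [h'])
      simp [h] at this
    rw [← Nat.pair_unpair i, ← Nat.pair_unpair j, hi.1, hj.1,
      (stage_le hi.2.1 hj.2.2).antisymm (stage_le hj.2.1 hi.2.2)]

namespace IsGraphEnumeration

variable {g : α →. β} {e : ℕ → Option (α × β)}

theorem hasSum_enumTerm_iff (he : IsGraphEnumeration g e) {φ : α → ℝ} {S : ℝ} :
    HasSum (enumTerm e φ) S ↔ HasSum (fun a : {a | (g a).Dom} => φ a) S := by
  choose index hindex using fun a : {a | (g a).Dom} => (he.mem_iff a _).1 (Part.get_mem a.2)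
  have index_injective : Function.Injective index := fun a a' h => by
    have := (hindex a).symm.trans (h ▸ hindex a')
    exact Subtype.ext (congrArg Prod.fst (Option.some_injective _ this))
  have eq_zero_of_notMem_range (i) (hi : i ∉ Set.range index) : enumTerm e φ i = 0 := by
    cases h : e i with
    | none => simp [enumTerm, h]
    | some x =>
      obtain ⟨a, b⟩ := x
      have hb : b ∈ g a := (he.mem_iff a b).2 ⟨i, h⟩
      refine absurd ⟨⟨a, hb.1⟩, he.eq_of_eq_some _ _ _ (hindex _) ?_⟩ hi
      rw [h, Part.get_eq_of_mem hb]
  rw [← index_injective.hasSum_iff eq_zero_of_notMem_range]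
  exact iff_of_eq (congrArg (HasSum · S) (funext fun a => enumTerm_of_eq_some φ (hindex a)))

theorem uniformlyComputable_sum_range (he : IsGraphEnumeration g e) {φ : α → ℝ}
    (hφ : UniformlyComputable φ) :
    UniformlyComputable fun k => ∑ i ∈ Finset.range k, enumTerm e φ i :=
  ((hφ.comp Computable.fst).option_elim he.computable).sum_range

end IsGraphEnumeration

theorem exists_computable_ne_of_lt {e : ℕ → Option (α × List Bool)} (he : Computable e) :
    ∃ t : ℕ → List Bool, Computable t ∧ ∀ k, ∀ i < k, ∀ a, e i ≠ some (a, t k) := by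
  let len (i : ℕ) : ℕ := ((e i).map fun x => x.2.length).getD 0
  have snd_length : Computable fun p : ℕ × α × List Bool => p.2.2.length := by fun_prop
  have hlen : Computable len := .option_getD (.option_map he snd_length.to₂) (.const 0)
  have hreplicate : Computable fun n => List.replicate n true :=
    ((Primrec.list_map .list_range (Primrec.const true).to₂).to_comp).of_eq fun n => by simp
  refine ⟨fun k => List.replicate (∑ i ∈ Finset.range k, (len i + 1)) true,
    hreplicate.comp (computable_sum_range .id (by fun_prop)), fun k i hi a h => ?_⟩
  have := Finset.single_le_sum (f := fun i => len i + 1) (fun _ _ => Nat.zero_le _)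
    (Finset.mem_range.2 hi)
  simp [len, h] at this

theorem Computer.leftComputable_tsum (U : Computer) {f : ℕ → ℝ} (hf : UniformlyComputable f)
    (hf_nonneg : ∀ l, 0 ≤ f l) (hs : Summable fun p : U.domain => f p.1.length) :
    LeftComputable (∑' p : U.domain, f p.1.length) := by
  obtain ⟨e, he⟩ := exists_isGraphEnumeration U.partrec
  have hsum := he.hasSum_enumTerm_iff (φ := fun p => f p.length).2 hs.hasSum
  have term_nonneg := enumTerm_nonneg e fun p => hf_nonneg p.length
  exact leftComputable_of_tendsto
    (he.uniformlyComputable_sum_range (hf.comp Computable.list_length))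
    (fun k => sum_le_hasSum _ (fun i _ => term_nonneg i) hsum) hsum.tendsto_sum_nat

end GraphEnumerations

section Tails

theorem le_tail_of_hasSum {a : ℕ → ℝ} {A : ℝ} (ha : HasSum a A) (ha_nonneg : ∀ i, 0 ≤ a i)
    {i k : ℕ} (hki : k ≤ i) : a i ≤ A - ∑ j ∈ Finset.range k, a j := by
  have := le_hasSum ((hasSum_nat_add_iff' k).2 ha) (i - k) fun j _ => ha_nonneg (j + k)
  rwa [Nat.sub_add_cancel hki] at this

theorem hasSum_le_mul_rpow {ι : Type*} {a b : ι → ℝ} {A B C ρ : ℝ} (ha : HasSum a A)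
    (hb : HasSum b B) (ha_nonneg : ∀ i, 0 ≤ a i) (hC : 0 ≤ C) (hρ : 1 ≤ ρ)
    (h : ∀ i, b i ≤ C * a i ^ ρ) : B ≤ C * A ^ ρ := by
  have rpow_eq {x : ℝ} (hx : 0 ≤ x) : x ^ ρ = x ^ (ρ - 1) * x := by
    rw [← Real.rpow_add_one' hx (by linarith), sub_add_cancel]
  have term_le (i : ι) : b i ≤ C * A ^ (ρ - 1) * a i :=
    calc b i ≤ C * (a i ^ (ρ - 1) * a i) := rpow_eq (ha_nonneg i) ▸ h i
      _ ≤ C * (A ^ (ρ - 1) * a i) := by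
        gcongr
        · exact ha_nonneg i
        · exact ha_nonneg i
        · exact le_hasSum ha i fun j _ => ha_nonneg j
      _ = C * A ^ (ρ - 1) * a i := (mul_assoc _ _ _).symm
  calc B ≤ C * A ^ (ρ - 1) * A := hasSum_le term_le hb (ha.mul_left _)
    _ = C * A ^ ρ := by rw [rpow_eq (ha.nonneg ha_nonneg), mul_assoc]

theorem tail_le_mul_rpow_tail {a b : ℕ → ℝ} {A B C ρ : ℝ} (ha : HasSum a A) (hb : HasSum b B)
    (ha_nonneg : ∀ i, 0 ≤ a i) (hC : 0 ≤ C) (hρ : 1 ≤ ρ) (h : ∀ i, b i ≤ C * a i ^ ρ) (k : ℕ) :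
    B - ∑ i ∈ Finset.range k, b i ≤ C * (A - ∑ i ∈ Finset.range k, a i) ^ ρ :=
  hasSum_le_mul_rpow ((hasSum_nat_add_iff' k).2 ha) ((hasSum_nat_add_iff' k).2 hb)
    (fun i => ha_nonneg (i + k)) hC hρ fun i => h (i + k)

theorem exists_lengthWeight_le_rpow (Q : ℝ) {T ρ : ℝ} (hρ : ρ < T⁻¹) :
    ∃ C, 0 ≤ C ∧ ∀ l : ℕ, lengthWeight Q T l ≤ C * ((1 / 2 : ℝ) ^ l) ^ ρ := by
  have rate_pos : 0 < Real.log 2 * (T⁻¹ - ρ) :=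
    mul_pos (Real.log_pos one_lt_two) (sub_pos.2 hρ)
  obtain ⟨C, hC⟩ := ((tendsto_rpow_mul_exp_neg_mul_atTop_nhds_zero Q _ rate_pos).comp
    tendsto_natCast_atTop_atTop).bddAbove_range
  have weight_eq (l : ℕ) : lengthWeight Q T l =
      (l : ℝ) ^ Q * Real.exp (-(Real.log 2 * (T⁻¹ - ρ)) * l) * ((1 / 2 : ℝ) ^ l) ^ ρ := by
    have : ((1 / 2 : ℝ) ^ l) ^ ρ = Real.exp (-(Real.log 2 * ρ) * l) := by
      rw [← Real.rpow_natCast, ← Real.rpow_mul (by positivity),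
        Real.rpow_def_of_pos (by positivity), one_div, Real.log_inv]
      ring_nf
    rw [lengthWeight, Real.rpow_def_of_pos two_pos, this, mul_assoc, ← Real.exp_add]
    ring_nf
  have C_ge (l : ℕ) : (l : ℝ) ^ Q * Real.exp (-(Real.log 2 * (T⁻¹ - ρ)) * l) ≤ C := hC ⟨l, rfl⟩
  refine ⟨C, (by positivity : (0 : ℝ) ≤ _).trans (C_ge 0), fun l => ?_⟩
  rw [weight_eq]
  gcongr
  exact C_ge l

theorem PrefixFree.summable_lengthWeight {S : Set (List Bool)} (hS : PrefixFree S) (h0 : [] ∉ S)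
    (Q : ℝ) {T : ℝ} (hT0 : 0 < T) (hT1 : T < 1) :
    Summable fun p : S => lengthWeight Q T p.1.length := by
  obtain ⟨C, -, hC⟩ := exists_lengthWeight_le_rpow Q ((one_lt_inv₀ hT0).2 hT1)
  simp only [Real.rpow_one] at hC
  exact ((hS.summable_two_pow_neg_length h0).mul_left C).of_nonneg_of_le
    (fun p => lengthWeight_nonneg Q T _) fun p => hC _

end Tails

section Randomness

variable {U : Computer}

theorem IsOptimal.exists_H_bits_ge (hU : IsOptimal U) {f : ℕ → ℝ} (hf : UniformlyComputable f)
    (hf_nonneg : ∀ l, 0 ≤ f l) (hs : Summable fun p : U.domain => f p.1.length) :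
    ∃ d : ℕ, ∀ n, ∃ l, l ≠ 0 ∧ l ≤ H U (bits (∑' p : U.domain, f p.1.length) n) + d ∧
      2 ^ n * f l < 6 := by
  obtain ⟨e, he⟩ := exists_isGraphEnumeration U.partrec
  set T := ∑' p : U.domain, f p.1.length
  have hsum : HasSum (enumTerm e fun p => f p.length) T := he.hasSum_enumTerm_iff.2 hs.hasSum
  have term_nonneg := enumTerm_nonneg e fun p => hf_nonneg p.length
  have hT : 0 ≤ T := hsum.nonneg term_nonneg
  have partialSums := he.uniformlyComputable_sum_range (hf.comp Computable.list_length)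
  obtain ⟨σ, hσ, stage⟩ := exists_partrec_stage partialSums hT hsum.tendsto_sum_nat
  obtain ⟨t, ht, t_fresh⟩ := exists_computable_ne_of_lt he.computable
  obtain ⟨d, hd⟩ := hU.exists_H_le_H_add (hσ.map (ht.comp .snd).to₂)
  refine ⟨d, fun n => ?_⟩
  obtain ⟨k, hk, tail_lt⟩ := stage n
  obtain ⟨p, hlen, hp⟩ := hU.exists_program_length_eq (t k)
  obtain ⟨i, hi⟩ := (he.mem_iff p (t k)).1 hp
  have hki : k ≤ i := le_of_not_gt fun hlt => t_fresh k i hlt p hi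
  have weight_le : f p.length ≤ T - ∑ j ∈ Finset.range k, enumTerm e (fun p => f p.length) j :=
    enumTerm_of_eq_some (fun p => f p.length) hi ▸ le_tail_of_hasSum hsum term_nonneg hki
  refine ⟨p.length, fun h => ?_, hlen ▸ hd _ _ (Part.mem_map t hk),
    (mul_le_mul_of_nonneg_left weight_le (by positivity)).trans_lt tail_lt⟩
  exact hU.nil_notMem_domain (List.eq_nil_of_length_eq_zero h ▸ hp.1)

theorem add_logb_lt_of_lengthWeight_lt {Q T : ℝ} (hT : 0 < T) {l n : ℕ} (hl : l ≠ 0)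
    (h : 2 ^ n * lengthWeight Q T l < 6) : T * (n - 3) + T * Q * Real.logb 2 l < l := by
  have hl' : (0 : ℝ) < l := by positivity
  have l_rpow : (l : ℝ) ^ Q = 2 ^ (Q * Real.logb 2 l) := by
    rw [mul_comm, Real.rpow_mul two_pos.le, Real.rpow_logb two_pos (by norm_num) hl']
  have exponents : (2 : ℝ) ^ (n + (Q * Real.logb 2 l + -(l : ℝ) / T)) < 2 ^ (3 : ℝ) :=
    calc _ = 2 ^ n * lengthWeight Q T l := by
          rw [Real.rpow_add two_pos, Real.rpow_add two_pos, Real.rpow_natCast, lengthWeight, l_rpow]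
      _ < 6 := h
      _ < 2 ^ (3 : ℝ) := by norm_num
  have := (Real.rpow_lt_rpow_left_iff one_lt_two).1 exponents
  calc T * (n - 3) + T * Q * Real.logb 2 l
      = T * (n + (Q * Real.logb 2 l + -(l : ℝ) / T) - 3) + l := by field_simp; ring
    _ < l := by nlinarith

theorem tendsto_sub_mul_atTop_of_lengthWeight_lt {Q T : ℝ} (hQ : 0 < Q) (hT : 0 < T) {h : ℕ → ℕ}
    {d : ℕ} (hd : ∀ n, ∃ l, l ≠ 0 ∧ l ≤ h n + d ∧ 2 ^ n * lengthWeight Q T l < 6) :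
    Tendsto (fun n : ℕ => (h n : ℝ) - T * n) atTop atTop := by
  choose l l_ne l_le weight_lt using hd
  have l_gt (n : ℕ) := add_logb_lt_of_lengthWeight_lt hT (l_ne n) (weight_lt n)
  have logb_nonneg (n : ℕ) : 0 ≤ Real.logb 2 (l n) :=
    Real.logb_nonneg one_lt_two (by exact_mod_cast Nat.one_le_iff_ne_zero.2 (l_ne n))
  have l_tendsto : Tendsto (fun n => (l n : ℝ)) atTop atTop := by
    have linear : Tendsto (fun n : ℕ => T * ((n : ℝ) + -3)) atTop atTop :=
      (tendsto_atTop_add_const_right _ _ tendsto_natCast_atTop_atTop).const_mul_atTop hT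
    refine tendsto_atTop_mono (fun n => ?_) linear
    have := mul_nonneg (mul_pos hT hQ).le (logb_nonneg n)
    linarith [l_gt n]
  have logb_tendsto : Tendsto (fun n => T * Q * Real.logb 2 (l n) + (-3 * T - d)) atTop atTop :=
    tendsto_atTop_add_const_right _ _
      (((Real.tendsto_logb_atTop one_lt_two).comp l_tendsto).const_mul_atTop (mul_pos hT hQ))
  refine tendsto_atTop_mono (fun n => ?_) logb_tendsto
  have : (l n : ℝ) ≤ h n + d := by exact_mod_cast l_le n
  linarith [l_gt n]

end Randomness

section Compressibility

variable {U : Computer}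

theorem uniformlyComputable_half_pow : UniformlyComputable fun l : ℕ => (1 / 2 : ℝ) ^ l :=
  .of_div (u := fun _ N => N) (v := fun l _ => 2 ^ l) (by fun_prop) (by fun_prop) fun l N => by
    simp [div_eq_mul_inv]

theorem exists_floor_eq_add_sub {x : ℝ} {m E : ℕ} (h : |x - m| ≤ E) :
    ∃ e : Fin (2 * E + 1), ⌊x⌋₊ = m + e - E := by
  obtain ⟨h_lower, h_upper⟩ := abs_le.1 h
  have floor_le : ⌊x⌋₊ ≤ m + E := Nat.floor_le_of_le (by push_cast; linarith)
  have le_floor : m ≤ ⌊x⌋₊ + E := by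
    have := Nat.lt_floor_add_one x
    have : (m : ℝ) < (⌊x⌋₊ + E + 1 : ℕ) := by push_cast; linarith
    exact Nat.lt_succ_iff.1 (by exact_mod_cast this)
  exact ⟨⟨⌊x⌋₊ + E - m, by lia⟩, by simp only; lia⟩

theorem two_pow_mul_le_of_le_rpow {δ ε B C : ℝ} {K M n : ℕ} (hK : K ≠ 0) (hM : M ≠ 0)
    (hC : 0 ≤ C) (hδ : 0 ≤ δ) (hδB : 2 ^ (K * (n / M)) * δ ≤ B)
    (hε : ε ≤ C * δ ^ (M / K : ℝ)) : 2 ^ n * ε ≤ 2 ^ M * (C * B ^ (M / K : ℝ)) := by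
  have pow_le : (2 : ℝ) ^ n ≤ 2 ^ M * 2 ^ (M * (n / M)) := by
    rw [← pow_add]
    exact pow_le_pow_right₀ one_le_two (by
      have := Nat.mod_add_div n M
      have := Nat.mod_lt n (Nat.pos_of_ne_zero hM)
      lia)
  have pow_eq : (2 : ℝ) ^ (M * (n / M)) = (2 ^ (K * (n / M))) ^ (M / K : ℝ) := by
    rw [← Real.rpow_natCast, ← Real.rpow_natCast, ← Real.rpow_mul two_pos.le]
    congr 1
    push_cast
    field_simp
  calc 2 ^ n * ε ≤ 2 ^ n * (C * δ ^ (M / K : ℝ)) := by gcongr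
    _ ≤ 2 ^ M * 2 ^ (M * (n / M)) * (C * δ ^ (M / K : ℝ)) := by gcongr
    _ = 2 ^ M * (C * (2 ^ (K * (n / M)) * δ) ^ (M / K : ℝ)) := by
      rw [Real.mul_rpow (by positivity) hδ, ← pow_eq]
      ring
    _ ≤ 2 ^ M * (C * B ^ (M / K : ℝ)) := by gcongr

/-- Beyond the first `K * (n / M)` bits of `Ω`, the data needed to recover the first `n` bits of `T`
are `n % M` and a bounded integer correction to the approximation of `2 ^ n * S k`. -/
theorem IsOptimal.exists_H_bits_le (hU : IsOptimal U) {S O : ℕ → ℝ} {T Ω C : ℝ} {K M : ℕ}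
    (hK : K ≠ 0) (hM : M ≠ 0) (hS : UniformlyComputable S) (hO : UniformlyComputable O)
    (hT : 0 ≤ T) (hΩ : 0 ≤ Ω) (S_le : ∀ k, S k ≤ T) (O_le : ∀ k, O k ≤ Ω)
    (hlim : Tendsto O atTop (nhds Ω)) (hC : 0 ≤ C)
    (h : ∀ k, T - S k ≤ C * (Ω - O k) ^ (M / K : ℝ)) :
    ∃ c, ∀ n, H U (bits T n) ≤ (K + 1) * (n / M) + c := by
  obtain ⟨a, ha, a_approx⟩ := hS
  obtain ⟨σ, hσ, stage⟩ := exists_partrec_stage hO hΩ hlim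
  obtain ⟨E, hE⟩ := exists_nat_ge (2 ^ M * (C * 6 ^ (M / K : ℝ)) + 2)
  let width (r : Fin M) (s : List Bool) : ℕ := M * (s.length / K) + r
  let decoder (i : Fin M × Fin (2 * E + 1)) (s : List Bool) : Part (List Bool) :=
    (σ s).map fun k => lowBits (width i.1 s) (a k (2 ^ width i.1 s) + i.2 - E)
  have hdecoder (i) : Partrec (decoder i) := by
    have hwidth : Computable fun p : List Bool × ℕ => width i.1 p.1 := by fun_prop
    have happrox : Computable fun p : List Bool × ℕ => a p.2 (2 ^ width i.1 p.1) :=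
      ha.comp (Computable.snd.pair (by fun_prop))
    exact hσ.map (computable_lowBits hwidth
      (computable_sub (computable_add happrox (.const _)) (.const E))).to₂
  obtain ⟨d, hd⟩ := hU.exists_forall_H_le_H_add hdecoder
  obtain ⟨c, hc⟩ := hU.exists_H_le_of_length_eq_mul K
  refine ⟨c + d, fun n => ?_⟩
  obtain ⟨k, hk, tail_lt⟩ := stage (K * (n / M))
  have tail_le := two_pow_mul_le_of_le_rpow hK hM hC (sub_nonneg.2 (O_le k)) tail_lt.le (h k)
  have abs_sub_le : |T * 2 ^ n - a k (2 ^ n)| ≤ E := by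
    have tail_nonneg : 0 ≤ 2 ^ n * (T - S k) := mul_nonneg (by positivity) (sub_nonneg.2 (S_le k))
    have := abs_le.1 (a_approx k (2 ^ n))
    push_cast at this
    exact abs_le.2 ⟨by linarith, by linarith⟩
  obtain ⟨e, he⟩ := exists_floor_eq_add_sub abs_sub_le
  let r : Fin M := ⟨n % M, Nat.mod_lt n (Nat.pos_of_ne_zero hM)⟩
  have width_eq : width r (bits Ω (K * (n / M))) = n := by
    simp [width, r, length_bits, hK, Nat.div_add_mod]
  have mem_decoder : bits T n ∈ decoder (r, e) (bits Ω (K * (n / M))) := by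
    refine (Part.mem_map_iff _).2 ⟨k, hk, ?_⟩
    simp only [width_eq, bits_eq_lowBits hT, he]
  calc H U (bits T n) ≤ H U (bits Ω (K * (n / M))) + d := hd _ _ _ mem_decoder
    _ ≤ (K + 1) * (n / M) + (c + d) := by
      have := hc (n / M) _ (length_bits Ω _)
      lia

theorem IsOptimal.exists_H_bits_tsum_lengthWeight_le (hU : IsOptimal U) {Q D : ℝ} (hQ : 0 < Q)
    (hQc : ComputableReal Q) (hD : 0 < D) (hDc : ComputableReal D)
    (hs : Summable fun p : U.domain => lengthWeight Q D p.1.length) {K M : ℕ} (hM : M ≠ 0)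
    (hKM : K ≤ M) (hDM : D * M < K) :
    ∃ c, ∀ n, H U (bits (∑' p : U.domain, lengthWeight Q D p.1.length) n)
      ≤ (K + 1) * (n / M) + c := by
  have hM' : (0 : ℝ) < M := by positivity
  have hK' : (0 : ℝ) < K := (mul_pos hD hM').trans hDM
  have one_le : (1 : ℝ) ≤ M / K := (one_le_div hK').2 (by exact_mod_cast hKM)
  have lt_inv : (M / K : ℝ) < D⁻¹ := by
    rwa [div_lt_iff₀ hK', ← div_eq_inv_mul, lt_div_iff₀ hD, mul_comm]
  obtain ⟨C, hC, weight_le⟩ := exists_lengthWeight_le_rpow Q lt_inv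
  obtain ⟨e, he⟩ := exists_isGraphEnumeration U.partrec
  have weight_sum := he.hasSum_enumTerm_iff (φ := fun p => lengthWeight Q D p.length).2 hs.hasSum
  have prob_sum := he.hasSum_enumTerm_iff (φ := fun p => (1 / 2 : ℝ) ^ p.length).2
    (U.prefixFree.summable_two_pow_neg_length hU.nil_notMem_domain).hasSum
  have weight_nonneg := enumTerm_nonneg e fun p => lengthWeight_nonneg Q D p.length
  have prob_nonneg := enumTerm_nonneg e
    fun p : List Bool => (by positivity : (0 : ℝ) ≤ (1 / 2) ^ p.length)
  have term_le (i : ℕ) : enumTerm e (fun p => lengthWeight Q D p.length) i ≤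
      C * enumTerm e (fun p => (1 / 2 : ℝ) ^ p.length) i ^ (M / K : ℝ) := by
    cases h : e i with
    | none => simpa [enumTerm, h] using by positivity
    | some x => simpa [enumTerm, h] using weight_le x.1.length
  exact hU.exists_H_bits_le (by exact_mod_cast hK'.ne') hM
    (he.uniformlyComputable_sum_range
      ((uniformlyComputable_lengthWeight hQ hQc hD hDc).comp Computable.list_length))
    (he.uniformlyComputable_sum_range (uniformlyComputable_half_pow.comp Computable.list_length))
    (weight_sum.nonneg weight_nonneg) (prob_sum.nonneg prob_nonneg)
    (fun k => sum_le_hasSum _ (fun i _ => weight_nonneg i) weight_sum)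
    (fun k => sum_le_hasSum _ (fun i _ => prob_nonneg i) prob_sum) prob_sum.tendsto_sum_nat hC
    (tail_le_mul_rpow_tail prob_sum weight_sum prob_nonneg hC one_le term_le)

theorem limsup_div_le_of_le_mul_div {h : ℕ → ℕ} {K M c : ℕ} (hM : M ≠ 0)
    (hle : ∀ n, h n ≤ K * (n / M) + c) :
    limsup (fun n => (h n : ℝ) / n) atTop ≤ K / M := by
  have bound (n : ℕ) : (h n : ℝ) / n ≤ K / M + c / n := by
    rcases eq_or_ne n 0 with rfl | hn
    · simpa using by positivity
    have h_le : (h n : ℝ) ≤ K * (n / M : ℕ) + c := by exact_mod_cast hle n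
    have : (n : ℝ) ≠ 0 := by positivity
    calc (h n : ℝ) / n ≤ (K * (n / M) + c) / n := by
          gcongr
          exact h_le.trans (by gcongr; exact Nat.cast_div_le)
      _ = K / M + c / n := by field_simp
  have hlim : Tendsto (fun n : ℕ => (K / M + c / n : ℝ)) atTop (nhds (K / M)) := by
    simpa using (tendsto_const_div_atTop_nhds_zero_nat (c : ℝ)).const_add (K / M : ℝ)
  have cobounded : IsCoboundedUnder (· ≤ ·) atTop fun n => (h n : ℝ) / n :=
    IsBoundedUnder.isCoboundedUnder_le ⟨0, eventually_map.2 (.of_forall fun n => by positivity)⟩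
  exact (limsup_le_limsup (.of_forall bound) cobounded hlim.isBoundedUnder_le).trans
    hlim.limsup_eq.le

theorem exists_nat_ratio_close {D ε : ℝ} (hD0 : 0 ≤ D) (hD1 : D < 1) (hε : 0 < ε) :
    ∃ K M : ℕ, M ≠ 0 ∧ K ≤ M ∧ D * M < K ∧ (K + 1) / M ≤ D + ε := by
  obtain ⟨M, hM⟩ := exists_nat_gt (max (2 / ε) (1 / (1 - D)))
  obtain ⟨two_lt, one_lt⟩ := max_lt_iff.1 hM
  have hM' : (0 : ℝ) < M := (div_pos two_pos hε).trans two_lt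
  rw [div_lt_iff₀ hε] at two_lt
  rw [div_lt_iff₀ (sub_pos.2 hD1)] at one_lt
  have floor_le := Nat.floor_le (mul_nonneg hD0 hM'.le)
  refine ⟨⌊D * M⌋₊ + 1, M, by exact_mod_cast hM'.ne', ?_, mod_cast Nat.lt_floor_add_one _, ?_⟩
  · have : ((⌊D * M⌋₊ + 1 : ℕ) : ℝ) ≤ M := by push_cast; linarith
    exact_mod_cast this
  · rw [div_le_iff₀ hM']
    push_cast
    linarith

end Compressibility

/-- **Theorem (paper Thm 3(i)).** For computable `Q > 0` and computable
`0 < D < 1`, `W(Q,D) = ∑_{p ∈ dom U} |p|^Q·2^{-|p|/D}` converges to a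
left-computable real which is Chaitin `D`-random and `D`-compressible. -/
theorem W_converges_random_compressible (U : Computer) (hU : IsOptimal U)
    (Q D : ℝ) (hQpos : 0 < Q) (hQc : ComputableReal Q)
    (hD0 : 0 < D) (hD1 : D < 1) (hDc : ComputableReal D) :
    Summable (wterm U Q D) ∧
    LeftComputable (∑' p, wterm U Q D p) ∧
    ChaitinRandom U D (∑' p, wterm U Q D p) ∧
    DCompressible U D (∑' p, wterm U Q D p) := by
  have weight_computable := uniformlyComputable_lengthWeight hQpos hQc hD0 hDc
  have weight_nonneg := lengthWeight_nonneg Q D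
  have summable : Summable (wterm U Q D) :=
    U.prefixFree.summable_lengthWeight hU.nil_notMem_domain Q hD0 hD1
  refine ⟨summable, U.leftComputable_tsum weight_computable weight_nonneg summable, ?_, ?_⟩
  · obtain ⟨d, hd⟩ := hU.exists_H_bits_ge weight_computable weight_nonneg summable
    exact tendsto_sub_mul_atTop_of_lengthWeight_lt hQpos hD0 hd
  · refine le_of_forall_pos_le_add fun ε hε => ?_
    obtain ⟨K, M, hM, hKM, hDM, ratio_le⟩ := exists_nat_ratio_close hD0.le hD1 hε
    obtain ⟨c, hc⟩ :=
      hU.exists_H_bits_tsum_lengthWeight_le hQpos hQc hD0 hDc summable hM hKM hDM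
    exact (limsup_div_le_of_le_mul_div hM hc).trans (by exact_mod_cast ratio_le)
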